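/- For every n ≥ 1 and every strictly increasing integer sequence k_1 < k_2 < ⋯ < k_n, the set 𝒢_n(k_1,…,k_n) of Generalized Monotone Triangles with bottom row (k_1,…,k_n) is equal to the set of Monotone Triangles with bottom row (k_1,…,k_n), and every element A of this set satisfies sc(A) = 0 (it contains no newcomers and no sign-changing pairs). -/

import Mathlib

/-- A triangular array of size `n`, encoded as a function `ℕ → ℕ → ℤ` whose
meaningful entries are `a i j` for `1 ≤ j ≤ i ≤ n` (row `i` has entries
`a i 1, …, a i i`), normalized to be `0` outside this region. -/
def IsTri (n : ℕ) (a : ℕ → ℕ → ℤ) : Prop :=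
  ∀ i j, ¬ (1 ≤ j ∧ j ≤ i ∧ i ≤ n) → a i j = 0

/-- A Monotone Triangle of size `n`: strict increase along rows and weak
increase along North-East and South-East diagonals. -/
def IsMT (n : ℕ) (a : ℕ → ℕ → ℤ) : Prop :=
  IsTri n a ∧
  (∀ i j, 1 ≤ j → j + 1 ≤ i → i ≤ n → a i j < a i (j + 1)) ∧
  (∀ i j, 1 ≤ j → j ≤ i → i + 1 ≤ n →
    a (i + 1) j ≤ a i j ∧ a i j ≤ a (i + 1) (j + 1))

/-- A Generalized Monotone Triangle (GMT) of size `n`. -/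
def IsGMT (n : ℕ) (a : ℕ → ℕ → ℤ) : Prop :=
  IsTri n a ∧
  -- (1) each entry is weakly bounded by its SW- and SE-neighbour
  (∀ i j, 1 ≤ j → j ≤ i → i + 1 ≤ n →
    min (a (i + 1) j) (a (i + 1) (j + 1)) ≤ a i j ∧
    a i j ≤ max (a (i + 1) j) (a (i + 1) (j + 1))) ∧
  -- (2) three weakly increasing consecutive entries force strict increase above
  (∀ i j, 1 ≤ j → j + 1 ≤ i → i + 1 ≤ n →
    a (i + 1) j ≤ a (i + 1) (j + 1) → a (i + 1) (j + 1) ≤ a (i + 1) (j + 2) →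
    a i j < a i (j + 1)) ∧
  -- (3) equality over a strict descent forces an equal neighbour
  (∀ i j, 1 ≤ j → j ≤ i → i + 1 ≤ n →
    (a i j = a (i + 1) j → a (i + 1) (j + 1) < a (i + 1) j →
      2 ≤ j ∧ a i (j - 1) = a i j) ∧
    (a (i + 1) (j + 1) < a (i + 1) j → a (i + 1) (j + 1) = a i j →
      j + 1 ≤ i ∧ a i (j + 1) = a i j))

/-- The bottom row of a triangular array of size `n` is `(k 0, …, k (n-1))`
(1-indexed in the array). -/
def BottomRow (n : ℕ) (a : ℕ → ℕ → ℤ) (k : Fin n → ℤ) : Prop :=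
  ∀ j : Fin n, a n (j.1 + 1) = k j

/-- The set of Monotone Triangles of size `n` with bottom row `k`. -/
def MTset (n : ℕ) (k : Fin n → ℤ) : Set (ℕ → ℕ → ℤ) :=
  {a | IsMT n a ∧ BottomRow n a k}

/-- The set `𝒢ₙ(k)` of Generalized Monotone Triangles of size `n` with bottom row `k`. -/
def GMTset (n : ℕ) (k : Fin n → ℤ) : Set (ℕ → ℕ → ℤ) :=
  {a | IsGMT n a ∧ BottomRow n a k}

/-- The positions `(i, j)` of newcomers of a triangular array:
`a (i+1) j > a i j > a (i+1) (j+1)`. -/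
def newcomersF (n : ℕ) (a : ℕ → ℕ → ℤ) : Finset (ℕ × ℕ) :=
  ((Finset.range (n + 1)) ×ˢ (Finset.range (n + 1))).filter (fun p =>
    1 ≤ p.2 ∧ p.2 ≤ p.1 ∧ p.1 + 1 ≤ n ∧
    a p.1 p.2 < a (p.1 + 1) p.2 ∧ a (p.1 + 1) (p.2 + 1) < a p.1 p.2)

/-- The positions `(i, j)` of sign-changing pairs `(a i j, a i (j+1))` of a
triangular array: two equal consecutive entries whose interlaced neighbour
below is also equal to them. -/
def scPairsF (n : ℕ) (a : ℕ → ℕ → ℤ) : Finset (ℕ × ℕ) :=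
  ((Finset.range (n + 1)) ×ˢ (Finset.range (n + 1))).filter (fun p =>
    1 ≤ p.2 ∧ p.2 + 1 ≤ p.1 ∧ p.1 + 1 ≤ n ∧
    a p.1 p.2 = a p.1 (p.2 + 1) ∧ a (p.1 + 1) (p.2 + 1) = a p.1 p.2)

/-- `sc(A)`: the total number of newcomers and sign-changing pairs of `A`. -/
def scT (n : ℕ) (a : ℕ → ℕ → ℤ) : ℕ :=
  (newcomersF n a).card + (scPairsF n a).card

/-! With a weakly increasing row below it, each row of a generalized monotone triangle is strictly
increasing by condition (2), so increase propagates upwards from the bottom row. Once no row has a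
descent, the bounds in (1) become the diagonal inequalities of a monotone triangle, and (3) is
vacuous. -/

variable {n i j : ℕ} {a : ℕ → ℕ → ℤ} {k : Fin n → ℤ}

theorem BottomRow.strictMonoOn (h : BottomRow n a k) (hk : StrictMono k) :
    StrictMonoOn (a n) (Set.Icc 1 n) := by
  refine strictMonoOn_of_lt_add_one Set.ordConnected_Icc fun j _ hj hj' => ?_
  obtain ⟨m, rfl⟩ := Nat.exists_eq_add_of_le' hj.1
  have hlt : k ⟨m, hj.2⟩ < k ⟨m + 1, hj'.2⟩ := hk (Nat.lt_succ_self m)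
  rwa [← h, ← h] at hlt

theorem IsMT.strictMonoOn_row (h : IsMT n a) (hi : i ≤ n) : StrictMonoOn (a i) (Set.Icc 1 i) :=
  strictMonoOn_of_lt_add_one Set.ordConnected_Icc fun j _ hj hj' => h.2.1 i j hj.1 hj'.2 hi

theorem IsMT.isGMT (h : IsMT n a) : IsGMT n a := by
  obtain ⟨htri, hrow, hdiag⟩ := h
  refine ⟨htri, fun i j hj hji hi => ?_, fun i j hj hji hi _ _ => hrow i j hj hji (by lia),
    fun i j hj hji hi => ?_⟩
  · exact ⟨min_le_of_left_le (hdiag i j hj hji hi).1, le_max_of_le_right (hdiag i j hj hji hi).2⟩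
  · have hasc := hrow (i + 1) j hj (by lia) hi
    exact ⟨fun _ hdesc => absurd hdesc hasc.not_gt, fun hdesc => absurd hdesc hasc.not_gt⟩

namespace IsGMT

theorem strictMonoOn_row_of_monotoneOn (h : IsGMT n a) (hi : i < n)
    (hbelow : MonotoneOn (a (i + 1)) (Set.Icc 1 (i + 1))) : StrictMonoOn (a i) (Set.Icc 1 i) := by
  refine strictMonoOn_of_lt_add_one Set.ordConnected_Icc fun j _ hj hj' => ?_
  obtain ⟨hj1, -⟩ := hj
  obtain ⟨-, hji⟩ := hj'
  exact h.2.2.1 i j hj1 hji hi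
    (hbelow ⟨hj1, by lia⟩ ⟨by lia, by lia⟩ (Nat.le_succ j))
    (hbelow ⟨by lia, by lia⟩ ⟨by lia, by lia⟩ (Nat.le_succ (j + 1)))

theorem monotoneOn_row (h : IsGMT n a) (hbot : MonotoneOn (a n) (Set.Icc 1 n)) (hi : i ≤ n) :
    MonotoneOn (a i) (Set.Icc 1 i) := by
  induction hi using Nat.decreasingInduction with
  | self => exact hbot
  | of_succ i hi ih => exact (h.strictMonoOn_row_of_monotoneOn hi ih).monotoneOn

theorem strictMonoOn_row (h : IsGMT n a) (hbot : MonotoneOn (a n) (Set.Icc 1 n)) (hi : i < n) :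
    StrictMonoOn (a i) (Set.Icc 1 i) :=
  h.strictMonoOn_row_of_monotoneOn hi (h.monotoneOn_row hbot hi)

theorem mem_Icc_of_le (h : IsGMT n a) (hj : 1 ≤ j) (hji : j ≤ i) (hi : i < n)
    (hle : a (i + 1) j ≤ a (i + 1) (j + 1)) :
    a i j ∈ Set.Icc (a (i + 1) j) (a (i + 1) (j + 1)) := by
  have hbounds := h.2.1 i j hj hji hi
  rwa [min_eq_left hle, max_eq_right hle] at hbounds

end IsGMT

theorem isMT_iff_isGMT_and_strictMonoOn :
    IsMT n a ↔ IsGMT n a ∧ StrictMonoOn (a n) (Set.Icc 1 n) := by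
  refine ⟨fun h => ⟨h.isGMT, h.strictMonoOn_row le_rfl⟩, fun ⟨h, hbot⟩ =>
    ⟨h.1, fun i j hj hji hi => ?_, fun i j hj hji hi => ?_⟩⟩
  · have hrow : StrictMonoOn (a i) (Set.Icc 1 i) := by
      obtain rfl | hlt := hi.eq_or_lt
      · exact hbot
      · exact h.strictMonoOn_row hbot.monotoneOn hlt
    exact hrow ⟨hj, by lia⟩ ⟨by lia, hji⟩ (Nat.lt_succ_self j)
  · have hrow := h.monotoneOn_row hbot.monotoneOn hi
    exact h.mem_Icc_of_le hj hji hi (hrow ⟨hj, by lia⟩ ⟨by lia, by lia⟩ (Nat.le_succ j))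

theorem newcomersF_eq_empty (hrow : ∀ i ≤ n, MonotoneOn (a i) (Set.Icc 1 i)) :
    newcomersF n a = ∅ := by
  refine Finset.filter_eq_empty_iff.2 ?_
  rintro ⟨i, j⟩ - ⟨hj, hji, hi, hleft, hright⟩
  have hle : a (i + 1) j ≤ a (i + 1) (j + 1) :=
    hrow (i + 1) hi ⟨hj, by lia⟩ ⟨by lia, by lia⟩ (Nat.le_succ j)
  exact (hright.trans hleft).not_ge hle

theorem scPairsF_eq_empty (hrow : ∀ i < n, Set.InjOn (a i) (Set.Icc 1 i)) :
    scPairsF n a = ∅ := by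
  refine Finset.filter_eq_empty_iff.2 ?_
  rintro ⟨i, j⟩ - ⟨hj, hji, hi, heq, -⟩
  have hcols : j = j + 1 := hrow i hi ⟨hj, by lia⟩ ⟨by lia, hji⟩ heq
  exact j.succ_ne_self hcols.symm

theorem IsGMT.scT_eq_zero (h : IsGMT n a) (hbot : MonotoneOn (a n) (Set.Icc 1 n)) :
    scT n a = 0 := by
  have hnew : newcomersF n a = ∅ := newcomersF_eq_empty fun _ hi => h.monotoneOn_row hbot hi
  have hpairs : scPairsF n a = ∅ :=
    scPairsF_eq_empty fun _ hi => (h.strictMonoOn_row hbot hi).injOn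
  rw [scT, hnew, hpairs, Finset.card_empty]

/-- For every `n ≥ 1` and every strictly increasing `k`, the set of Generalized
Monotone Triangles with bottom row `k` equals the set of Monotone Triangles
with bottom row `k`, and every element has `sc(A) = 0`. -/
theorem GMT_eq_MT_of_strictMono (n : ℕ) (hn : 1 ≤ n)
    (k : Fin n → ℤ) (hk : StrictMono k) :
    GMTset n k = MTset n k ∧ ∀ a ∈ GMTset n k, scT n a = 0 := by
  constructor
  · ext a
    refine and_congr_left fun hrow : BottomRow n a k => ?_
    rw [isMT_iff_isGMT_and_strictMonoOn, and_iff_left (hrow.strictMonoOn hk)]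
  · rintro a ⟨hGMT, hrow⟩
    exact hGMT.scT_eq_zero (hrow.strictMonoOn hk).monotoneOn
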